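/- arXiv:1911.04349 — 2 statements merged into one kernel-verified Lean document; each statement's English description precedes it below -/
import Mathlib

section
/- There exists C > 0 such that for each sign σ ∈ {+1,−1} and all nonnegative square-summable sequences f, g, h : ℤ → [0,∞): Σ_{n₁, n₂ ∈ ℤ} ( ⟨n₁⟩^{−1/2} ( ⟨n₁−n₂⟩ + ⟨n₂⟩ ) / ( ⟨Φ_σ⟩^{1/2} ⟨n₂⟩^{1/2} ) ) f_{n₁−n₂} g_{n₁} h_{n₂} ≤ C ‖f‖_{ℓ²} ‖g‖_{ℓ²} ‖h‖_{ℓ²}. -/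
open scoped ENNReal NNReal

/-- `⟨x⟩ = (1+x²)^{1/2}`. -/
noncomputable def jbR (x : ℝ) : ℝ := Real.sqrt (1 + x ^ 2)

/-- The Zakharov phase `Φ_σ = n₁² - n₂² + σ⟨n₀⟩` with `n₀ = n₁ - n₂`. -/
noncomputable def PhiZak (σ : ℝ) (n₁ n₂ : ℤ) : ℝ :=
  ((n₁ ^ 2 - n₂ ^ 2 : ℤ) : ℝ) + σ * jbR ((n₁ - n₂ : ℤ) : ℝ)

/-- The `ℓ²(ℤ)` norm (valued in `[0,∞]`). -/
noncomputable def l2Z (ω : ℤ → ℝ≥0) : ℝ≥0∞ :=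
  (∑' n : ℤ, ((ω n : ℝ≥0∞)) ^ 2) ^ (1/2 : ℝ)

noncomputable def l2E {α : Type} (F : α → ℝ≥0∞) : ℝ≥0∞ := (∑' n, (F n) ^ 2) ^ (1/2 : ℝ)

lemma cs_tsum (u v : ℤ × ℤ → ℝ≥0∞) : ∑' p, u p * v p ≤ l2E u * l2E v := by
  have := ENNReal.lintegral_mul_le_Lp_mul_Lq (MeasureTheory.Measure.count (α := ℤ × ℤ))
    (p := 2) (q := 2) (by constructor <;> norm_num) (f := u) (g := v)
    (measurable_of_countable _).aemeasurable (measurable_of_countable _).aemeasurable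
  simp only [MeasureTheory.lintegral_count, Pi.mul_apply] at this
  simpa [l2E] using this

lemma l2_prod (F G : ℤ → ℝ≥0∞) (e : ℤ × ℤ → ℤ × ℤ) (he : Function.Injective e) :
    l2E (fun p => F (e p).1 * G (e p).2) ≤ l2E F * l2E G := by
  unfold l2E
  rw [← ENNReal.mul_rpow_of_nonneg _ _ (by norm_num)]
  gcongr
  calc _ ≤ ∑' p : ℤ × ℤ, (F p.1 * G p.2) ^ 2 :=
        ENNReal.tsum_comp_le_tsum_of_injective he (fun p : ℤ × ℤ => (F p.1 * G p.2) ^ 2)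
    _ = _ := by
        rw [ENNReal.tsum_prod', ← ENNReal.tsum_mul_right]
        congr 1; ext a
        rw [← ENNReal.tsum_mul_left]
        congr 1; ext b
        rw [mul_pow]

lemma tri (F1 G1 F2 G2 : ℤ → ℝ≥0∞) (e ee : ℤ × ℤ → ℤ × ℤ) (he : Function.Injective e)
    (hee : Function.Injective ee) :
    ∑' p, (F1 (e p).1 * G1 (e p).2) * (F2 (ee p).1 * G2 (ee p).2)
      ≤ (l2E F1 * l2E G1) * (l2E F2 * l2E G2) :=
  (cs_tsum _ _).trans (mul_le_mul' (l2_prod _ _ _ he) (l2_prod _ _ _ hee))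

lemma jb_sq (x : ℝ) : jbR x ^ 2 = 1 + x ^ 2 := Real.sq_sqrt (by positivity)
lemma jb_one (x : ℝ) : 1 ≤ jbR x := Real.one_le_sqrt.2 (by nlinarith [sq_nonneg x])
lemma jb_abs (x : ℝ) : |x| ≤ jbR x := Real.abs_le_sqrt (by linarith)
lemma jb_le (x : ℝ) : jbR x ≤ 1 + |x| := by
  apply Real.sqrt_le_iff.2 ⟨by positivity, ?_⟩
  nlinarith [sq_abs x, abs_nonneg x]
lemma jb_neg (x : ℝ) : jbR (-x) = jbR x := by simp [jbR]
lemma jb_add (x y : ℝ) : jbR (x + y) ≤ jbR x + jbR y := by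
  have hx := jb_one x
  have hy := jb_one y
  apply Real.sqrt_le_iff.2 ⟨by positivity, ?_⟩
  have : x * y ≤ jbR x * jbR y := by
    calc x * y ≤ |x| * |y| := by rw [← abs_mul]; exact le_abs_self _
      _ ≤ _ := mul_le_mul (jb_abs x) (jb_abs y) (abs_nonneg _) (by linarith)
  nlinarith [jb_sq x, jb_sq y]

lemma sumK : ∑' n : ℤ, (ENNReal.ofReal (1 / jbR n)) ^ 2 ≠ ∞ := by
  have h : Summable (fun n : ℤ => (1 / jbR n) ^ 2) := by
    refine Summable.of_norm_bounded_eventually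
      (Real.summable_one_div_int_pow (p := 2).2 (by norm_num)) ?_
    filter_upwards [Set.Finite.compl_mem_cofinite (Set.finite_singleton (0:ℤ))] with n hn
    have hn : (n:ℝ) ≠ 0 := by exact_mod_cast hn
    rw [div_pow, jb_sq, Real.norm_of_nonneg (by positivity), one_pow]
    apply one_div_le_one_div_of_le (by positivity)
    linarith
  have := h.tsum_ofReal_ne_top
  convert this using 3 with n
  rw [ENNReal.ofReal_pow]
  have := jb_one n
  positivity

/-- Lower bound for the phase away from resonance. -/
lemma phase_lower (σ : ℝ) (hσ : σ = 1 ∨ σ = -1) (m n : ℤ) (h0 : m - n ≠ 0)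
    (h1 : |m + n| ≠ 1) :
    jbR ((m - n : ℤ) : ℝ) * jbR ((m + n : ℤ) : ℝ) ≤ 10 * jbR (PhiZak σ m n) := by
  set k := m - n with hk
  set t := m + n with ht
  have hPhi : PhiZak σ m n = (k:ℝ) * t + σ * jbR k := by
    unfold PhiZak; rw [← hk]; congr 1
    rw [hk, ht]; push_cast; ring
  have hσ1 : |σ| = 1 := by rcases hσ with h | h <;> simp [h]
  have hd := jb_one k
  have habs : |σ * jbR k| = jbR k := by
    rw [abs_mul, hσ1, one_mul, abs_of_nonneg (by linarith)]
  have hP := jb_abs (PhiZak σ m n)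
  by_cases ht0 : t = 0
  · have : |PhiZak σ m n| = jbR k := by rw [hPhi, ht0]; simpa using habs
    rw [ht0]
    have : jbR ((0:ℤ):ℝ) = 1 := by simp [jbR]
    rw [this]; linarith
  · have ht2 : 2 ≤ |t| := by
      have := abs_pos.2 ht0
      omega
    have ht2 : (2:ℝ) ≤ |(t:ℝ)| := by exact_mod_cast ht2
    have hk1 : (1:ℝ) ≤ |(k:ℝ)| := by
      have := abs_pos.2 h0
      exact_mod_cast this
    have hkd : 0.7 * jbR k ≤ |(k:ℝ)| := by
      apply abs_le_of_sq_le_sq' _ (by positivity) |>.2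
      rw [mul_pow, jb_sq, sq_abs]
      nlinarith [sq_abs (k:ℝ)]
    have h3 : |(k:ℝ)| * |(t:ℝ)| - jbR k ≤ |PhiZak σ m n| := by
      rw [hPhi, ← abs_mul, ← habs]
      have := abs_sub_abs_le_abs_sub ((k:ℝ) * t) (-(σ * jbR k))
      rw [abs_neg, sub_neg_eq_add, habs] at this
      rw [habs]; exact this
    have hs := jb_le t
    have h4 : 0.7 * jbR k * |(t:ℝ)| ≤ |(k:ℝ)| * |(t:ℝ)| := by gcongr
    have h5 : jbR k * jbR t ≤ jbR k * (1 + |(t:ℝ)|) := by gcongr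
    have h6 : jbR k * 2 ≤ jbR k * |(t:ℝ)| := by gcongr
    nlinarith

lemma alg_main (a b d s P : ℝ) (ha : 1 ≤ a) (hb : 1 ≤ b) (hd : 1 ≤ d) (hs : 1 ≤ s)
    (hP : d * s ≤ 10 * P) (h1 : d ≤ a + b) (h2 : b ≤ a + d) :
    (d + b) ^ 2 ≤ (10 * (1 / b + 1 / d + 1 / s + 1 / a)) ^ 2 * (a * P * b) := by
  have e1 : (d + b) ^ 2 ≤ 2 * d * (a + b) + 2 * b * (a + d) := by
    nlinarith [sq_nonneg (d - b), mul_nonneg (by linarith : (0:ℝ) ≤ d) (sub_nonneg.2 h1),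
      mul_nonneg (by linarith : (0:ℝ) ≤ b) (sub_nonneg.2 h2)]
  have e2 : 1 / (b * s) + 2 / (a * s) + 1 / (d * s) ≤ (1 / b + 1 / d + 1 / s + 1 / a) ^ 2 := by
    have : (1 / b + 1 / d + 1 / s + 1 / a) ^ 2 = 1 / (b * s) + 2 / (a * s) + 1 / (d * s)
      + ((1/b)^2 + (1/d)^2 + (1/s)^2 + (1/a)^2 + 2 * (1/b) * (1/d) + 2 * (1/b)*(1/a)
        + 2 * (1/d) * (1/a) + 1 / (b * s) + 1 / (d * s)) := by
      field_simp; ring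
    rw [this]
    have : 0 ≤ ((1/b)^2 + (1/d)^2 + (1/s)^2 + (1/a)^2 + 2 * (1/b) * (1/d) + 2 * (1/b)*(1/a)
        + 2 * (1/d) * (1/a) + 1 / (b * s) + 1 / (d * s)) := by positivity
    linarith
  have e3 : 2 * d * (a + b) + 2 * b * (a + d)
      = (1 / (b * s) + 2 / (a * s) + 1 / (d * s)) * (2 * (a * (d * s) * b)) := by
    field_simp; ring
  have hP0 : 0 < P := by nlinarith
  calc (d + b) ^ 2 ≤ (1 / (b * s) + 2 / (a * s) + 1 / (d * s)) * (2 * (a * (d * s) * b)) := by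
        have : 0 < d * b := by positivity
        linarith
    _ ≤ (1 / b + 1 / d + 1 / s + 1 / a) ^ 2 * (2 * (a * (10 * P) * b)) := by gcongr
    _ ≤ _ := by
        have : 0 ≤ (1 / b + 1 / d + 1 / s + 1 / a) ^ 2 * (a * P * b) := by positivity
        nlinarith

lemma alg_res (a b d s P : ℝ) (ha : 1 ≤ a) (hb : 1 ≤ b) (hd : 1 ≤ d) (hs : 1 ≤ s)
    (hP : 1 ≤ P) (hds : d ≤ 2 ∨ s ≤ 2) (h1 : d + b ≤ a + 2 * b) (h2 : b ≤ 3 * a) (h3 : a ≤ 3 * b) :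
    (d + b) ^ 2 ≤ (10 * (1 / b + 1 / d + 1 / s + 1 / a)) ^ 2 * (a * P * b) := by
  have e1 : 5 ≤ 10 * (1 / b + 1 / d + 1 / s + 1 / a) := by
    have := one_div_pos.2 (by linarith : 0 < a)
    have := one_div_pos.2 (by linarith : 0 < b)
    have := one_div_pos.2 (by linarith : 0 < d)
    have := one_div_pos.2 (by linarith : 0 < s)
    rcases hds with h | h
    · have := one_div_le_one_div_of_le (by linarith) h
      linarith
    · have := one_div_le_one_div_of_le (by linarith) h
      linarith
  have e2 : (d + b) ^ 2 ≤ (a + 2 * b) ^ 2 := by gcongr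
  have e3 : (a + 2 * b) ^ 2 ≤ 25 * (a * b) := by
    nlinarith [mul_nonneg (by linarith : (0:ℝ) ≤ a) (sub_nonneg.2 h3),
      mul_nonneg (by linarith : (0:ℝ) ≤ b) (sub_nonneg.2 h2)]
  calc (d + b) ^ 2 ≤ 5 ^ 2 * (a * 1 * b) := by linarith
    _ ≤ _ := by gcongr

lemma pointwise (σ : ℝ) (hσ : σ = 1 ∨ σ = -1) (m n : ℤ) :
    jbR (m : ℝ) ^ (-(1/2) : ℝ) * (jbR ((m - n : ℤ) : ℝ) + jbR (n : ℝ)) /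
      (jbR (PhiZak σ m n) ^ (1/2 : ℝ) * jbR (n : ℝ) ^ (1/2 : ℝ)) ≤
    10 * (1 / jbR n + 1 / jbR ((m - n : ℤ) : ℝ) + 1 / jbR ((m + n : ℤ) : ℝ) + 1 / jbR m) := by
  have ha := jb_one (m:ℝ)
  have hb := jb_one (n:ℝ)
  have hd := jb_one ((m - n : ℤ) : ℝ)
  have hs := jb_one ((m + n : ℤ) : ℝ)
  have hP := jb_one (PhiZak σ m n)
  have h1 : jbR ((m - n : ℤ) : ℝ) ≤ jbR m + jbR n := by
    have := jb_add m (-n)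
    rw [jb_neg] at this
    push_cast; exact this
  have h2 : jbR n ≤ jbR m + jbR ((m - n : ℤ) : ℝ) := by
    have := jb_add m (-((m - n : ℤ) : ℝ))
    rw [jb_neg] at this
    convert this using 2
    push_cast; ring
  have h3 : jbR n ≤ jbR m + jbR ((m + n : ℤ) : ℝ) := by
    have := jb_add (-m) (((m + n : ℤ) : ℝ))
    rw [jb_neg] at this
    convert this using 2
    push_cast; ring
  have h4 : jbR m ≤ jbR n + jbR ((m + n : ℤ) : ℝ) := by
    have := jb_add (-n) (((m + n : ℤ) : ℝ))
    rw [jb_neg] at this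
    convert this using 2
    push_cast; ring
  have h5 : jbR m ≤ jbR n + jbR ((m - n : ℤ) : ℝ) := by
    have := jb_add (n) (((m - n : ℤ) : ℝ))
    convert this using 2
    push_cast; ring
  have key : (jbR ((m - n : ℤ) : ℝ) + jbR n) ^ 2 ≤
      (10 * (1 / jbR n + 1 / jbR ((m - n : ℤ) : ℝ) + 1 / jbR ((m + n : ℤ) : ℝ) + 1 / jbR m)) ^ 2
        * (jbR m * jbR (PhiZak σ m n) * jbR n) := by
    by_cases c0 : m - n = 0
    · have hd2 : jbR ((m - n : ℤ) : ℝ) ≤ 2 := by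
        have := jb_le ((m - n : ℤ) : ℝ)
        rw [c0] at this ⊢; norm_num at this ⊢; linarith
      exact alg_res _ _ _ _ _ ha hb hd hs hP (Or.inl hd2) (by linarith) (by linarith) (by linarith)
    by_cases c1 : |m + n| = 1
    · have hs2 : jbR ((m + n : ℤ) : ℝ) ≤ 2 := by
        have := jb_le ((m + n : ℤ) : ℝ)
        rw [← Int.cast_abs, c1] at this; norm_num at this ⊢; linarith
      exact alg_res _ _ _ _ _ ha hb hd hs hP (Or.inr hs2) (by linarith) (by linarith) (by linarith)
    exact alg_main _ _ _ _ _ ha hb hd hs (phase_lower σ hσ m n c0 c1) h1 h2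
  generalize jbR ((m - n : ℤ) : ℝ) = d at *
  generalize jbR ((m + n : ℤ) : ℝ) = s at *
  generalize jbR (PhiZak σ m n) = P at *
  generalize jbR (m : ℝ) = a at *
  generalize jbR (n : ℝ) = b at *
  have ea : a ^ (-(1/2) : ℝ) = (√a)⁻¹ := by
    rw [Real.rpow_neg (by linarith), ← Real.sqrt_eq_rpow]
  rw [ea, ← Real.sqrt_eq_rpow, ← Real.sqrt_eq_rpow]
  have p1 : 0 < √a := Real.sqrt_pos.2 (by linarith)
  have p2 : 0 < √b := Real.sqrt_pos.2 (by linarith)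
  have p3 : 0 < √P := Real.sqrt_pos.2 (by linarith)
  set R := 10 * (1 / b + 1 / d + 1 / s + 1 / a) with hR
  have hR0 : 0 ≤ R := by positivity
  clear_value R
  have : d + b ≤ R * (√a * √P * √b) := by
    apply abs_le_of_sq_le_sq' _ (by positivity) |>.2
    rw [mul_pow, mul_pow, mul_pow, Real.sq_sqrt (by linarith), Real.sq_sqrt (by linarith),
      Real.sq_sqrt (by linarith)]
    exact key
  have e : (√a)⁻¹ * (d + b) / (√P * √b) = (d + b) / (√a * √P * √b) := by
    field_simp
  rw [e, div_le_iff₀ (by positivity)]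
  exact this

/-- The Zakharov trilinear weight estimate with weight
`⟨n₁⟩^{-1/2} (⟨n₁-n₂⟩ + ⟨n₂⟩) / (⟨Φ_σ⟩^{1/2} ⟨n₂⟩^{1/2})`. -/
theorem Zakharov_W3 :
    ∃ C : ℝ, 0 < C ∧
      ∀ σ : ℝ, (σ = 1 ∨ σ = -1) →
        ∀ f g h : ℤ → ℝ≥0,
          Summable (fun n => f n ^ 2) → Summable (fun n => g n ^ 2) →
          Summable (fun n => h n ^ 2) →
          (∑' p : ℤ × ℤ,
              ENNReal.ofReal (jbR (p.1 : ℝ) ^ (-(1/2) : ℝ) *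
                  (jbR ((p.1 - p.2 : ℤ) : ℝ) + jbR (p.2 : ℝ)) /
                  (jbR (PhiZak σ p.1 p.2) ^ (1/2 : ℝ) * jbR (p.2 : ℝ) ^ (1/2 : ℝ))) *
                (f (p.1 - p.2) : ℝ≥0∞) * (g p.1 : ℝ≥0∞) * (h p.2 : ℝ≥0∞))
            ≤ ENNReal.ofReal C * (l2Z f * l2Z g * l2Z h) := by
  set k : ℤ → ℝ≥0∞ := fun n => ENNReal.ofReal (1 / jbR n) with hk
  have hS : l2E k ≠ ∞ := ENNReal.rpow_ne_top_of_nonneg (by norm_num) sumK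
  refine ⟨40 * (l2E k).toReal + 1, by positivity, ?_⟩
  intro σ hσ f g h _ _ _
  set F : ℤ → ℝ≥0∞ := fun n => f n with hF
  set G : ℤ → ℝ≥0∞ := fun n => g n with hG
  set H : ℤ → ℝ≥0∞ := fun n => h n with hH
  have i1 : Function.Injective (fun p : ℤ × ℤ => p) := fun _ _ h => h
  have i2 : Function.Injective (fun p : ℤ × ℤ => (p.1, p.1 - p.2)) := by
    rintro ⟨a, b⟩ ⟨c, d⟩ h; simp only [Prod.mk.injEq] at h ⊢; omega
  have i3 : Function.Injective (fun p : ℤ × ℤ => (p.1, p.1 + p.2)) := by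
    rintro ⟨a, b⟩ ⟨c, d⟩ h; simp only [Prod.mk.injEq] at h ⊢; omega
  have i4 : Function.Injective (fun p : ℤ × ℤ => (p.1 - p.2, p.2)) := by
    rintro ⟨a, b⟩ ⟨c, d⟩ h; simp only [Prod.mk.injEq] at h ⊢; omega
  have t1 := tri G k F H _ _ i1 i4
  have t2 := tri G k F H _ _ i2 i4
  have t3 := tri G k F H _ _ i3 i4
  have t4 := tri k H G F _ _ i1 i2
  calc _ ≤ ∑' p : ℤ × ℤ, 10 * (G p.1 * k p.2 * (F (p.1 - p.2) * H p.2)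
            + G p.1 * k (p.1 - p.2) * (F (p.1 - p.2) * H p.2)
            + G p.1 * k (p.1 + p.2) * (F (p.1 - p.2) * H p.2)
            + k p.1 * H p.2 * (G p.1 * F (p.1 - p.2))) := by
        refine ENNReal.tsum_le_tsum fun p => ?_
        have hw := ENNReal.ofReal_le_ofReal (pointwise σ hσ p.1 p.2)
        have pos : ∀ x : ℝ, 0 ≤ 1 / jbR x := fun x => by have := jb_one x; positivity
        have er : ENNReal.ofReal (10 * (1 / jbR p.2 + 1 / jbR ((p.1 - p.2 : ℤ) : ℝ)
            + 1 / jbR ((p.1 + p.2 : ℤ) : ℝ) + 1 / jbR p.1))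
            = 10 * (k p.2 + k (p.1 - p.2) + k (p.1 + p.2) + k p.1) := by
          rw [ENNReal.ofReal_mul (by norm_num), ENNReal.ofReal_add (add_nonneg (add_nonneg (pos _) (pos _)) (pos _)) (pos _),
            ENNReal.ofReal_add (add_nonneg (pos _) (pos _)) (pos _), ENNReal.ofReal_add (pos _) (pos _)]
          simp [hk]
        rw [er] at hw
        calc _ ≤ 10 * (k p.2 + k (p.1 - p.2) + k (p.1 + p.2) + k p.1) * F (p.1 - p.2) * G p.1 * H p.2 := by
              gcongr
          _ = _ := by ring
    _ ≤ 10 * (l2E G * l2E k * (l2E F * l2E H) + l2E G * l2E k * (l2E F * l2E H)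
          + l2E G * l2E k * (l2E F * l2E H) + l2E k * l2E H * (l2E G * l2E F)) := by
        rw [ENNReal.tsum_mul_left, ENNReal.tsum_add, ENNReal.tsum_add, ENNReal.tsum_add]
        gcongr
    _ = 40 * l2E k * (l2E F * l2E G * l2E H) := by ring
    _ ≤ _ := by
        have : 40 * l2E k ≤ ENNReal.ofReal (40 * (l2E k).toReal + 1) := by
          calc 40 * l2E k = ENNReal.ofReal (40 * (l2E k).toReal) := by
                rw [ENNReal.ofReal_mul (by norm_num), ENNReal.ofReal_toReal hS]; norm_num
            _ ≤ _ := ENNReal.ofReal_le_ofReal (by linarith)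
        exact mul_le_mul' this le_rfl
end

section
/- There exists C > 0 such that for all nonnegative square-summable sequences f, g, h : ℤ → [0,∞): Σ_{m, k ∈ ℤ} f_m g_{m+k} h_k / ( ⟨m⟩^{1/2} ⟨m+2k⟩^{1/2} ) ≤ C ‖f‖_{ℓ²} ‖g‖_{ℓ²} ‖h‖_{ℓ²}. -/
open scoped ENNReal NNReal

theorem aux_cs {ι : Type*} (u v : ι → ℝ≥0∞) :
    ∑' i, u i * v i ≤ (∑' i, u i ^ 2) ^ (1/2 : ℝ) * (∑' i, v i ^ 2) ^ (1/2 : ℝ) := by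
  rw [ENNReal.tsum_eq_iSup_sum]
  refine iSup_le fun s => ?_
  have h := ENNReal.inner_le_Lp_mul_Lq s u v (p := 2) (q := 2) Real.HolderConjugate.two_two
  refine h.trans ?_
  simp only [ENNReal.rpow_ofNat]
  gcongr
  · exact ENNReal.sum_le_tsum s
  · exact ENNReal.sum_le_tsum s

theorem aux_summable : Summable (fun n : ℤ => 1 / (1 + (n : ℝ) ^ 2)) := by
  have h := (Real.summable_one_div_int_pow (p := 2)).2 (by norm_num)
  refine Summable.of_norm_bounded_eventually h ?_
  have : ({0}ᶜ : Set ℤ) ∈ Filter.cofinite := (Set.finite_singleton 0).compl_mem_cofinite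
  filter_upwards [this] with n hn
  have hn' : (n : ℝ) ≠ 0 := by exact_mod_cast hn
  have : 0 < (n : ℝ) ^ 2 := by positivity
  rw [Real.norm_of_nonneg (by positivity)]
  gcongr
  linarith

theorem jbR_pos (x : ℝ) : 0 < jbR x := Real.sqrt_pos.2 (by positivity)

/-- Reciprocal bracket at integers. -/
noncomputable def auxA (n : ℤ) : ℝ≥0∞ := ENNReal.ofReal (1 / jbR (n : ℝ))

theorem auxA_sum : ∑' n, auxA n ^ 2 ≠ ∞ := by
  have : ∀ n : ℤ, auxA n ^ 2 = ENNReal.ofReal (1 / (1 + (n : ℝ) ^ 2)) := by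
    intro n
    have := jbR_pos n
    rw [auxA, ← ENNReal.ofReal_pow (by positivity), div_pow, jbR, Real.sq_sqrt (by positivity),
      one_pow]
  simp_rw [this]
  exact aux_summable.tsum_ofReal_ne_top

theorem aux_weight (a b : ℤ) :
    ENNReal.ofReal (1 / (jbR (a : ℝ) ^ (1/2 : ℝ) * jbR (b : ℝ) ^ (1/2 : ℝ)))
      ≤ auxA a + auxA b := by
  have ha := jbR_pos a
  have hb := jbR_pos b
  unfold auxA
  rw [← ENNReal.ofReal_add (by positivity) (by positivity)]
  apply ENNReal.ofReal_le_ofReal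
  have key : ∀ x y : ℝ, 0 < x → x ≤ y → 1 / (x ^ (1/2 : ℝ) * y ^ (1/2 : ℝ)) ≤ 1 / x := by
    intro x y hx hxy
    have : x = x ^ (1/2 : ℝ) * x ^ (1/2 : ℝ) := by
      rw [← Real.rpow_add hx]; norm_num
    apply one_div_le_one_div_of_le hx
    calc x = x ^ (1/2 : ℝ) * x ^ (1/2 : ℝ) := this
      _ ≤ _ := by gcongr
  have h1 : 0 < 1 / jbR (a : ℝ) := by positivity
  have h2 : 0 < 1 / jbR (b : ℝ) := by positivity
  rcases le_total (jbR (a : ℝ)) (jbR (b : ℝ)) with h | h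
  · linarith [key _ _ ha h]
  · rw [mul_comm]
    linarith [key _ _ hb h]

theorem aux_shift (g : ℤ → ℝ≥0∞) (m : ℤ) : ∑' k, g (m + k) = ∑' k, g k :=
  (Equiv.addLeft m).tsum_eq g

theorem aux_one (f g h : ℤ → ℝ≥0) :
    ∑' p : ℤ × ℤ, auxA p.1 * (f p.1 : ℝ≥0∞) * (g (p.1 + p.2) : ℝ≥0∞) * (h p.2 : ℝ≥0∞)
      ≤ (∑' n, auxA n ^ 2) ^ (1/2 : ℝ) * (l2Z f * l2Z g * l2Z h) := by
  rw [ENNReal.tsum_prod']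
  have h1 : ∀ m : ℤ, ∑' k : ℤ, auxA m * (f m : ℝ≥0∞) * (g (m + k) : ℝ≥0∞) * (h k : ℝ≥0∞)
      ≤ auxA m * f m * (l2Z g * l2Z h) := by
    intro m
    simp_rw [mul_assoc (auxA m * (f m : ℝ≥0∞))]
    rw [ENNReal.tsum_mul_left]
    gcongr
    refine (aux_cs _ _).trans_eq ?_
    rw [aux_shift (fun n => (g n : ℝ≥0∞) ^ 2) m]
    rfl
  refine (ENNReal.tsum_le_tsum h1).trans ?_
  rw [ENNReal.tsum_mul_right, mul_assoc (l2Z f),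
    ← mul_assoc ((∑' n, auxA n ^ 2) ^ (1/2 : ℝ))]
  gcongr
  exact aux_cs _ _

theorem aux_two (f g h : ℤ → ℝ≥0) :
    ∑' p : ℤ × ℤ, auxA (p.1 + 2 * p.2) * (f p.1 : ℝ≥0∞) * (g (p.1 + p.2) : ℝ≥0∞) * (h p.2 : ℝ≥0∞)
      ≤ (∑' n, auxA n ^ 2) ^ (1/2 : ℝ) * (l2Z f * l2Z g * l2Z h) := by
  simp_rw [mul_assoc (auxA _ * (f _ : ℝ≥0∞))]
  refine (aux_cs _ _).trans ?_
  rw [mul_assoc (l2Z f), ← mul_assoc]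
  have half : (0 : ℝ) ≤ 1 / 2 := by norm_num
  unfold l2Z
  simp_rw [← ENNReal.mul_rpow_of_nonneg _ _ half]
  refine ENNReal.rpow_le_rpow (mul_le_mul' ?_ ?_) half
  · rw [ENNReal.tsum_prod', ← ENNReal.tsum_mul_left]
    refine ENNReal.tsum_le_tsum fun m => ?_
    simp_rw [mul_pow]
    rw [ENNReal.tsum_mul_right]
    refine mul_le_mul_left ?_ _
    refine ENNReal.tsum_comp_le_tsum_of_injective (f := fun k : ℤ => m + 2 * k) ?_
      (fun n => auxA n ^ 2)
    intro x y hxy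
    simp only at hxy
    omega
  · rw [ENNReal.tsum_prod', ENNReal.tsum_comm, ← ENNReal.tsum_mul_left]
    refine ENNReal.tsum_le_tsum fun k => ?_
    simp_rw [mul_pow]
    rw [ENNReal.tsum_mul_right]
    refine mul_le_mul_left ?_ _
    simp_rw [add_comm _ k]
    exact (aux_shift (fun n => (g n : ℝ≥0∞) ^ 2) k).le

/-- `Σ_{m,k} f_m g_{m+k} h_k / (⟨m⟩^{1/2} ⟨m+2k⟩^{1/2})
≤ C ‖f‖_{ℓ²} ‖g‖_{ℓ²} ‖h‖_{ℓ²}`. -/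
theorem bilinear_weighted_convolution_bound :
    ∃ C : ℝ, 0 < C ∧
      ∀ f g h : ℤ → ℝ≥0,
        Summable (fun n => f n ^ 2) → Summable (fun n => g n ^ 2) →
        Summable (fun n => h n ^ 2) →
        (∑' p : ℤ × ℤ,
            ENNReal.ofReal (1 /
                (jbR (p.1 : ℝ) ^ (1/2 : ℝ) * jbR ((p.1 + 2 * p.2 : ℤ) : ℝ) ^ (1/2 : ℝ))) *
              (f p.1 : ℝ≥0∞) * (g (p.1 + p.2) : ℝ≥0∞) * (h p.2 : ℝ≥0∞))
          ≤ ENNReal.ofReal C * (l2Z f * l2Z g * l2Z h) := by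
  set S : ℝ≥0∞ := (∑' n, auxA n ^ 2) ^ (1/2 : ℝ) with hS
  have hfin : S ≠ ∞ := ENNReal.rpow_ne_top_of_nonneg (by norm_num) auxA_sum
  refine ⟨2 * S.toReal + 1, by positivity, fun f g h _ _ _ => ?_⟩
  have hC : S + S ≤ ENNReal.ofReal (2 * S.toReal + 1) := by
    calc S + S = ENNReal.ofReal (S.toReal + S.toReal) := by
          rw [ENNReal.ofReal_add (by positivity) (by positivity), ENNReal.ofReal_toReal hfin]
      _ ≤ _ := ENNReal.ofReal_le_ofReal (by linarith)
  calc _ ≤ ∑' p : ℤ × ℤ,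
        (auxA p.1 * (f p.1 : ℝ≥0∞) * (g (p.1 + p.2) : ℝ≥0∞) * (h p.2 : ℝ≥0∞)
        + auxA (p.1 + 2 * p.2) * (f p.1 : ℝ≥0∞) * (g (p.1 + p.2) : ℝ≥0∞) * (h p.2 : ℝ≥0∞)) := by
        refine ENNReal.tsum_le_tsum fun p => ?_
        rw [← add_mul, ← add_mul, ← add_mul]
        gcongr
        exact aux_weight _ _
    _ ≤ S * (l2Z f * l2Z g * l2Z h) + S * (l2Z f * l2Z g * l2Z h) := by
        rw [ENNReal.tsum_add]
        exact add_le_add (aux_one f g h) (aux_two f g h)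
    _ = (S + S) * (l2Z f * l2Z g * l2Z h) := by rw [add_mul]
    _ ≤ _ := by gcongr
end
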